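/- arXiv:0909.3564 — 3 statements merged into one kernel-verified Lean document; each statement's English description precedes it below -/
import Mathlib

section
/- There exists ϑ₀ ∈ (0,1) such that for every ϑ ∈ (0, ϑ₀) there exist a C^∞ function φ : ℝ → ℝ with φ(t) > 0 for t > 0, constants σ > 0, α ∈ (1,2) and c ∈ (0,1), such that: (i) φ(0) = 0, φ'(0) = 0, φ''(0) = 1 and lim_{t→0⁺} φ'(t)/t = 1; (ii) there exists T > 0 such that φ agrees with a polynomial of degree 2 on [T, ∞); (iii) the function t ↦ φ'(t)/t is strictly decreasing on (0, ∞) and lim_{t→+∞} φ'(t)/t < ϑ; (iv) min(φ'(t)/t, φ''(t)) ≥ σ for all t > 0, so that φ is strictly convex on [0, ∞) and 0 is the unique critical point of φ in [0, ∞); (v) φ(t) = c·t^α for every t > 0 with φ'(t)/t ∈ [ϑ, 1−ϑ]. -/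
open scoped ContDiff

lemma cutoff_antideriv (f : ℝ → ℝ) (hf : ContDiff ℝ ∞ f) :
    ∃ F : ℝ → ℝ, ContDiff ℝ ∞ F ∧ (∀ t, HasDerivAt F (f t) t) ∧ F 0 = 0 := by
  have hd : ∀ t, HasDerivAt (fun u => ∫ x in (0:ℝ)..u, f x) (f t) t := fun t =>
    intervalIntegral.integral_hasDerivAt_right (hf.continuous.intervalIntegrable _ _)
      (hf.continuous.stronglyMeasurableAtFilter _ _) hf.continuous.continuousAt
  refine ⟨_, ?_, hd, by simp⟩
  rw [contDiff_infty_iff_deriv]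
  refine ⟨fun t => (hd t).differentiableAt, ?_⟩
  have : deriv (fun u => ∫ x in (0:ℝ)..u, f x) = f := funext fun t => (hd t).deriv
  rw [this]; exact hf

lemma cutoff_stage0 : ∃ (h k : ℝ → ℝ) (K : ℝ), ContDiff ℝ ∞ h ∧ ContDiff ℝ ∞ k ∧
    (∀ t, HasDerivAt h (k t) t) ∧ h 0 = 0 ∧ MonotoneOn (fun t => t * k t) (Set.Ici 0) ∧
    (∀ t > 0, 0 < k t) ∧ (∀ t ≥ 1, k t = 1 / t) ∧ 0 ≤ K ∧
    ∀ t ∈ Set.Icc (0:ℝ) 1, |t * (k t + t * deriv k t)| ≤ K := by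
  set χ : ℝ → ℝ := fun t => Real.smoothTransition (2 * t - 1) with hχ
  have hχs : ContDiff ℝ ∞ χ := by
    have := Real.smoothTransition.contDiff (n := ⊤)
    exact this.comp (by fun_prop : ContDiff ℝ ∞ fun t : ℝ => 2 * t - 1)
  have h0 : ∀ t, 0 ≤ χ t := fun t => Real.smoothTransition.nonneg _
  have h1 : ∀ t, χ t ≤ 1 := fun t => Real.smoothTransition.le_one _
  have hz : ∀ t ≤ 1/2, χ t = 0 := fun t ht => Real.smoothTransition.zero_of_nonpos (by linarith)
  have ho : ∀ t ≥ 1, χ t = 1 := fun t ht => Real.smoothTransition.one_of_one_le (by linarith)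
  have hm : Monotone χ := fun a b hab => Real.smoothTransition.monotone (by linarith)
  set k : ℝ → ℝ := fun t => (1 - χ t) + χ t / t with hk
  have hks : ContDiff ℝ ∞ k := by
    rw [contDiff_iff_contDiffAt]
    intro t
    by_cases ht : t = 0
    · have : k =ᶠ[nhds t] fun _ => 1 := by
        filter_upwards [Iio_mem_nhds (show t < 1/2 by rw [ht]; norm_num)] with s hs
        simp [hk, hz s (le_of_lt hs)]
      exact contDiffAt_const.congr_of_eventuallyEq this
    · exact (contDiffAt_const.sub hχs.contDiffAt).add (hχs.contDiffAt.div contDiffAt_id ht)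
  obtain ⟨h, hhs, hhd, hh0⟩ := cutoff_antideriv k hks
  have hq : ∀ t, t * k t = (1 - χ t) * t + χ t := by
    intro t
    by_cases ht : t = 0
    · subst ht; simp [hz 0 (by norm_num)]
    · simp only [hk]; field_simp
  have hc : Continuous fun t => |t * (k t + t * deriv k t)| := by
    have := hks.continuous
    have h2 := hks.continuous_deriv (by simp)
    fun_prop
  obtain ⟨x, hx, hxm⟩ := (isCompact_Icc (a := (0:ℝ)) (b := 1)).exists_isMaxOn
    ⟨0, by simp⟩ hc.continuousOn
  refine ⟨h, k, _, hhs, hks, hhd, hh0, ?_, ?_, ?_, abs_nonneg _, fun t ht => hxm ht⟩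
  · intro a ha b hb hab
    simp only [hq]
    have ha : 0 ≤ a := ha
    rcases le_total b 1 with h | h
    · nlinarith [hm hab, h1 a, h1 b, h0 a]
    · rw [ho b h]
      rcases le_total a 1 with h' | h'
      · nlinarith [h1 a, h0 a]
      · rw [ho a h']; simp
  · intro t ht
    simp only [hk]
    by_cases h : χ t = 1
    · rw [h]; simp [ht]
    · have : χ t < 1 := lt_of_le_of_ne (h1 t) h
      have : 0 ≤ χ t / t := div_nonneg (h0 t) ht.le
      linarith
  · intro t ht
    simp [hk, ho t ht]

lemma cutoff_stage1 (ϑ : ℝ) (hϑ : ϑ ∈ Set.Ioo (0:ℝ) (1/2)) :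
    ∃ (f f1 f2 : ℝ → ℝ) (c α σ : ℝ), ContDiff ℝ ∞ f2 ∧
      (∀ t, HasDerivAt f (f1 t) t) ∧ (∀ t, HasDerivAt f1 (f2 t) t) ∧
      f 0 = 0 ∧ f1 0 = 0 ∧ f2 0 = 1 ∧ StrictAntiOn (fun t => f1 t / t) (Set.Ioi 0) ∧
      α ∈ Set.Ioo (1:ℝ) 2 ∧ c ∈ Set.Ioo (0:ℝ) 1 ∧ (∀ t ≥ 1, f t = c * t ^ α) ∧
      (∀ t ≥ 1, f1 t = c * α * t ^ (α - 1)) ∧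
      (∀ t > 1, f2 t = c * α * (α - 1) * t ^ (α - 2)) ∧
      1 - ϑ < f1 1 ∧ 0 < σ ∧ ∀ t ∈ Set.Icc (0:ℝ) 1, σ ≤ f2 t := by
  obtain ⟨h, k, K, hhs, hks, hhd, hh0, hmono, hkpos, hk1, hK, hKb⟩ := cutoff_stage0
  have hkc : Continuous k := hks.continuous
  have hhc : Continuous h := hhs.continuous
  have hsm : StrictMonoOn h (Set.Ici 0) := by
    apply strictMonoOn_of_deriv_pos (convex_Ici 0) hhc.continuousOn
    intro t ht
    rw [interior_Ici] at ht
    rw [(hhd t).deriv]; exact hkpos t ht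
  have hh1 : 0 < h 1 := by
    rw [← hh0]; exact hsm (by simp) (by simp) (by norm_num)
  -- choice of ε
  obtain ⟨ε, hε0, hε4, hεK, hεϑ⟩ : ∃ ε : ℝ, 0 < ε ∧ ε ≤ 1/4 ∧ ε * K ≤ 1/2 ∧
      1 - ϑ < Real.exp (-(ε * h 1)) * (1 - ε / 2) := by
    have e1 : ∀ᶠ ε in nhdsWithin (0:ℝ) (Set.Ioi 0), 0 < ε := self_mem_nhdsWithin
    have e2 : ∀ᶠ ε in nhdsWithin (0:ℝ) (Set.Ioi 0), ε < 1/4 :=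
      nhdsWithin_le_nhds (Iio_mem_nhds (by norm_num))
    have e3 : ∀ᶠ ε in nhdsWithin (0:ℝ) (Set.Ioi 0), ε * K < 1/2 := by
      apply nhdsWithin_le_nhds
      have : Continuous fun ε : ℝ => ε * K := by fun_prop
      exact this.continuousAt.eventually_lt continuousAt_const (by norm_num)
    have e4 : ∀ᶠ ε in nhdsWithin (0:ℝ) (Set.Ioi 0),
        1 - ϑ < Real.exp (-(ε * h 1)) * (1 - ε / 2) := by
      apply nhdsWithin_le_nhds
      have : Continuous fun ε : ℝ => Real.exp (-(ε * h 1)) * (1 - ε / 2) := by fun_prop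
      exact continuousAt_const.eventually_lt this.continuousAt (by simp [hϑ.1])
    obtain ⟨ε, a1, a2, a3, a4⟩ := (e1.and (e2.and (e3.and e4))).exists
    exact ⟨ε, a1, a2.le, a3.le, a4⟩
  have hkd : ∀ t, HasDerivAt k (deriv k t) t := fun t =>
    (hks.differentiable (by simp) t).hasDerivAt
  have hE : ∀ t, HasDerivAt (fun t => Real.exp (-(ε * h t)))
      (Real.exp (-(ε * h t)) * (-(ε * k t))) t := fun t =>
    ((hhd t).const_mul ε).neg.exp
  have hq1 : ∀ t ≥ 0, t * k t ≤ 1 := by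
    intro t ht
    have := hmono (a := t) (b := max t 1) ht (by simp [ht]) (le_max_left _ _)
    have h1 : max t 1 * k (max t 1) = 1 := by
      rw [hk1 _ (le_max_right _ _)]
      have : (0:ℝ) < max t 1 := by positivity
      field_simp
    simp only [h1] at this
    exact this
  have hq0 : ∀ t ≥ 0, 0 ≤ t * k t := by
    intro t ht
    have := hmono (a := 0) (b := t) (by simp) ht ht
    simpa using this
  have hlog : ∀ t ≥ 1, h t = h 1 + Real.log t := by
    intro t ht
    have key : ∀ x ∈ Set.Icc (1:ℝ) t, h x - Real.log x = h 1 - Real.log 1 := by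
      apply constant_of_derivWithin_zero
      · intro x hx
        have : x ≠ 0 := by linarith [hx.1]
        exact ((hhd x).sub (Real.hasDerivAt_log this)).differentiableAt.differentiableWithinAt
      · intro x hx
        have : x ≠ 0 := by linarith [hx.1]
        have hd := ((hhd x).sub (Real.hasDerivAt_log this))
        have := hd.hasDerivWithinAt (s := Set.Icc 1 t)
        have h2 := this.derivWithin ((uniqueDiffOn_Icc (lt_of_le_of_lt hx.1 hx.2)) x ⟨hx.1, hx.2.le⟩)
        have h3 : k x - x⁻¹ = 0 := by rw [hk1 x hx.1]; simp
        rw [h3] at h2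
        exact h2
    have := key t ⟨ht, le_rfl⟩
    simp at this
    linarith
  have hexp : ∀ t ≥ 1, Real.exp (-(ε * h t)) = Real.exp (-(ε * h 1)) * t ^ (-ε) := by
    intro t ht
    rw [hlog t ht, Real.rpow_def_of_pos (by linarith), ← Real.exp_add]
    congr 1; ring
  set f : ℝ → ℝ := fun t => t ^ 2 / 2 * Real.exp (-(ε * h t)) with hf
  set f1 : ℝ → ℝ := fun t => t * Real.exp (-(ε * h t)) * (1 - ε * (t * k t) / 2) with hf1
  set f2 : ℝ → ℝ := fun t => Real.exp (-(ε * h t)) *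
    ((1 - ε * (t * k t) / 2) * (1 - ε * (t * k t)) - ε * (t * (k t + t * deriv k t)) / 2) with hf2
  have hd2 : ContDiff ℝ ∞ (deriv k) := (contDiff_infty_iff_deriv.1 hks).2
  refine ⟨f, f1, f2, Real.exp (-(ε * h 1)) / 2, 2 - ε,
    Real.exp (-(ε * h 1)) * (1/8), ?_, ?_, ?_, ?_, ?_, ?_, ?_, ?_, ?_, ?_, ?_, ?_, ?_, ?_, ?_⟩
  · have := Real.contDiff_exp (n := ∞)
    simp only [hf2]
    fun_prop
  · intro t
    have := (((hasDerivAt_id t).pow 2).div_const 2).mul (hE t)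
    refine (this.congr_deriv ?_)
    simp [hf1]; ring
  · intro t
    have hq := ((((hasDerivAt_id t).mul (hkd t)).const_mul ε).div_const 2).const_sub 1
    have := ((hasDerivAt_id t).mul (hE t)).mul hq
    refine (this.congr_deriv ?_)
    simp [hf2]; ring
  · simp [hf]
  · simp [hf1]
  · simp [hf2, hh0]
  · have : ∀ t > 0, f1 t / t = Real.exp (-(ε * h t)) * (1 - ε * (t * k t) / 2) := by
      intro t ht
      simp only [hf1]; field_simp
    intro a ha b hb hab
    have ha : 0 < a := ha
    have hb : 0 < b := hb
    simp only [this a ha, this b hb]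
    have hm := hmono ha.le hb.le hab.le
    simp only at hm
    have hhm := hsm ha.le hb.le hab
    have hx : Real.exp (-(ε * h b)) < Real.exp (-(ε * h a)) := by
      apply Real.exp_lt_exp.2
      nlinarith
    have hqb := hq1 b hb.le
    have p1 : 0 < 1 - ε * (b * k b) / 2 := by nlinarith
    have p2 : 1 - ε * (b * k b) / 2 ≤ 1 - ε * (a * k a) / 2 := by nlinarith
    exact mul_lt_mul hx p2 p1 (Real.exp_pos _).le
  · constructor <;> linarith
  · refine ⟨by positivity, ?_⟩
    have : Real.exp (-(ε * h 1)) ≤ 1 := Real.exp_le_one_iff.2 (by nlinarith)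
    linarith
  · intro t ht
    simp only [hf]
    rw [hexp t ht, sub_eq_add_neg, Real.rpow_add (by linarith)]
    norm_num
    ring
  · intro t ht
    have : t * k t = 1 := by rw [hk1 t ht]; field_simp
    simp only [hf1]
    rw [hexp t ht, this, show 2 - ε - 1 = 1 + -ε by ring, Real.rpow_add (by linarith)]
    norm_num
    ring
  · intro t ht
    have h1 : t * k t = 1 := by rw [hk1 t ht.le]; field_simp
    have h2 : deriv k t = -(t^2)⁻¹ := by
      have : k =ᶠ[nhds t] fun x => x⁻¹ := by
        filter_upwards [Ioi_mem_nhds ht] with s hs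
        rw [hk1 s (le_of_lt hs)]; simp
      rw [this.deriv_eq]; simp
    have h3 : t * (k t + t * deriv k t) = 0 := by
      rw [h2, hk1 t ht.le]; field_simp; simp
    simp only [hf2]
    rw [hexp t ht.le, h1, h3, show 2 - ε - 2 = -ε by ring]
    ring
  · simp only [hf1]
    rw [hk1 1 le_rfl]
    simpa using hεϑ
  · positivity
  · intro t ht
    simp only [hf2]
    have a1 : Real.exp (-(ε * h 1)) ≤ Real.exp (-(ε * h t)) := by
      apply Real.exp_le_exp.2
      have := hsm.monotoneOn (a := t) (b := 1) ht.1 (by simp) ht.2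
      nlinarith
    have a2 := hKb t ht
    have a3 := hq1 t ht.1
    have a4 := hq0 t ht.1
    have a5 := (abs_le.1 a2).2
    apply mul_le_mul a1 _ (by norm_num) (Real.exp_pos _).le
    have a6 : ε * (t * (k t + t * deriv k t)) ≤ 1/2 :=
      (mul_le_mul_of_nonneg_left a5 hε0.le).trans hεK
    have a7 : ε * (t * k t) ≤ 1/4 := by nlinarith
    have a8 : 0 ≤ ε * (t * k t) := by positivity
    nlinarith

/-- Existence of the cut-off function `φ = φ_ϑ` of Lemma 2.1. -/
theorem exists_cutoff_function :
    ∃ ϑ₀ : ℝ, ϑ₀ ∈ Set.Ioo (0 : ℝ) 1 ∧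
      ∀ ϑ ∈ Set.Ioo (0 : ℝ) ϑ₀,
        ∃ (φ : ℝ → ℝ) (σ α c : ℝ),
          ContDiff ℝ ∞ φ ∧ (∀ t > (0 : ℝ), 0 < φ t) ∧
          0 < σ ∧ α ∈ Set.Ioo (1 : ℝ) 2 ∧ c ∈ Set.Ioo (0 : ℝ) 1 ∧
          -- (i)
          (φ 0 = 0 ∧ deriv φ 0 = 0 ∧ deriv (deriv φ) 0 = 1 ∧
            Filter.Tendsto (fun t => deriv φ t / t) (nhdsWithin 0 (Set.Ioi 0)) (nhds 1)) ∧
          -- (ii)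
          (∃ T > (0 : ℝ), ∃ p q r : ℝ, p ≠ 0 ∧ ∀ t ≥ T, φ t = p * t ^ 2 + q * t + r) ∧
          -- (iii)
          (StrictAntiOn (fun t => deriv φ t / t) (Set.Ioi 0) ∧
            ∃ L, Filter.Tendsto (fun t => deriv φ t / t) Filter.atTop (nhds L) ∧ L < ϑ) ∧
          -- (iv)
          ((∀ t > (0 : ℝ), σ ≤ min (deriv φ t / t) (deriv (deriv φ) t)) ∧
            StrictConvexOn ℝ (Set.Ici 0) φ ∧
            (∀ t ≥ (0 : ℝ), deriv φ t = 0 → t = 0)) ∧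
          -- (v)
          (∀ t > (0 : ℝ), deriv φ t / t ∈ Set.Icc ϑ (1 - ϑ) → φ t = c * t ^ α) := by
  refine ⟨1/2, by norm_num, ?_⟩
  intro ϑ hϑ
  obtain ⟨f, f1, f2, c, α, σ, hf2s, hfd, hf1d, hf0, hf10, hf20, hanti, hα, hc, hft, hf1t, hf2t,
    hone, hσ, hσb⟩ := cutoff_stage1 ϑ hϑ
  have hα1 := hα.1
  have hα2 := hα.2
  have hc0 := hc.1
  -- choice of T
  obtain ⟨T, hT2, hTϑ⟩ : ∃ T : ℝ, 2 ≤ T ∧ c * α * T ^ (α - 2) < ϑ := by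
    have h1 : Filter.Tendsto (fun T : ℝ => c * α * T ^ (-(2 - α))) Filter.atTop (nhds (c * α * 0)) :=
      (tendsto_rpow_neg_atTop (by linarith)).const_mul _
    have h2 := h1.eventually (Iio_mem_nhds (show c * α * 0 < ϑ by simpa using hϑ.1))
    obtain ⟨T, a, b⟩ := ((Filter.eventually_ge_atTop (2:ℝ)).and h2).exists
    refine ⟨T, a, ?_⟩
    simpa [neg_sub] using b
  have hf2anti : AntitoneOn f2 (Set.Ioi 1) := by
    intro a ha b hb hab
    rw [hf2t a ha, hf2t b hb]
    have ha : 1 < a := ha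
    apply mul_le_mul_of_nonneg_left
    · exact Real.rpow_le_rpow_of_nonpos (by linarith) hab (by linarith)
    · have : 0 < α - 1 := by linarith
      positivity
  set D := f2 (T + 1) with hD
  have hDpos : 0 < D := by
    rw [hD, hf2t _ (by linarith)]
    have : 0 < α - 1 := by linarith
    positivity
  have hf1T : f1 T = T * (c * α * T ^ (α - 2)) := by
    rw [hf1t T (by linarith), show α - 1 = 1 + (α - 2) by ring, Real.rpow_add (by linarith)]
    simp; ring
  have hf2T : f2 T = (α - 1) * (c * α * T ^ (α - 2)) := by
    rw [hf2t T (by linarith)]; ring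
  have hpos : 0 < c * α * T ^ (α - 2) := by positivity
  have hDϑ : D < ϑ := by
    have : D ≤ f2 T := hf2anti (show (1:ℝ) < T by linarith) (show (1:ℝ) < T + 1 by linarith) (by linarith)
    nlinarith
  set χ : ℝ → ℝ := fun t => Real.smoothTransition (t - T) with hχ
  have hχs : ContDiff ℝ ∞ χ := by
    have := Real.smoothTransition.contDiff (n := ⊤)
    exact this.comp (by fun_prop : ContDiff ℝ ∞ fun t : ℝ => t - T)
  have h0 : ∀ t, 0 ≤ χ t := fun t => Real.smoothTransition.nonneg _
  have h1 : ∀ t, χ t ≤ 1 := fun t => Real.smoothTransition.le_one _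
  have hz : ∀ t ≤ T, χ t = 0 := fun t ht => Real.smoothTransition.zero_of_nonpos (by linarith)
  have ho : ∀ t ≥ T + 1, χ t = 1 := fun t ht => Real.smoothTransition.one_of_one_le (by linarith)
  have hm : Monotone χ := fun a b hab => Real.smoothTransition.monotone (by linarith)
  set θ : ℝ → ℝ := fun t => D + (1 - χ t) * (f2 t - D) with hθ
  have hθs : ContDiff ℝ ∞ θ := by simp only [hθ]; fun_prop
  have hθlow : ∀ t ≤ T, θ t = f2 t := fun t ht => by simp [hθ, hz t ht]
  have hθhigh : ∀ t ≥ T + 1, θ t = D := fun t ht => by simp [hθ, ho t ht]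
  have hf2D : ∀ t > 1, t ≤ T + 1 → D ≤ f2 t := fun t ht ht' =>
    hf2anti ht (show (1:ℝ) < T + 1 by linarith) ht'
  have hθD : ∀ t > 1, D ≤ θ t := by
    intro t ht
    rcases le_total t (T + 1) with h | h
    · have := hf2D t ht h
      have : 0 ≤ (1 - χ t) * (f2 t - D) := mul_nonneg (by linarith [h1 t]) (by linarith)
      simp only [hθ]; linarith
    · rw [hθhigh t h]
  have hθanti : AntitoneOn θ (Set.Ici T) := by
    intro a ha b hb hab
    have ha : T ≤ a := ha
    rcases le_total b (T + 1) with h | h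
    · have e1 := hf2D b (by linarith) h
      have e2 : f2 b ≤ f2 a := hf2anti (show 1 < a by linarith) (show 1 < b by linarith) hab
      have e3 := hm hab
      have : (1 - χ b) * (f2 b - D) ≤ (1 - χ a) * (f2 a - D) :=
        mul_le_mul (by linarith) (by linarith) (by linarith) (by linarith [h1 a])
      simp only [hθ]; linarith
    · rw [hθhigh b h]; exact hθD a (by linarith)
  obtain ⟨ψ, hψs, hψd, hψ0⟩ := cutoff_antideriv θ hθs
  obtain ⟨φ, hφs, hφd, hφ0⟩ := cutoff_antideriv ψ hψs
  have hdφ : deriv φ = ψ := funext fun t => (hφd t).deriv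
  have hdψ : deriv ψ = θ := funext fun t => (hψd t).deriv
  -- uniqueness of antiderivatives on an interval
  have uniq : ∀ (a b : ℝ) (F G g : ℝ → ℝ), (∀ t, HasDerivAt F (g t) t) →
      (∀ t ∈ Set.Icc a b, HasDerivAt G (g t) t) → F a = G a → ∀ t ∈ Set.Icc a b, F t = G t := by
    intro a b F G g hF hG hFG
    apply eq_of_has_deriv_right_eq (f' := g)
    · intro x hx; exact (hF x).hasDerivWithinAt
    · intro x hx; exact (hG x ⟨hx.1, hx.2.le⟩).hasDerivWithinAt
    · intro x hx; exact (hF x).continuousAt.continuousWithinAt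
    · intro x hx; exact (hG x hx).continuousAt.continuousWithinAt
    · exact hFG
  have hψlow : ∀ t ∈ Set.Icc 0 T, ψ t = f1 t := by
    apply uniq 0 T ψ f1 θ hψd _ (by rw [hψ0, hf10])
    intro t ht; rw [hθlow t ht.2]; exact hf1d t
  have hφlow : ∀ t ∈ Set.Icc 0 T, φ t = f t := by
    apply uniq 0 T φ f ψ hφd _ (by rw [hφ0, hf0])
    intro t ht; rw [hψlow t ht]; exact hfd t
  have hψhigh : ∀ t ≥ T + 1, ψ t = D * t + (ψ (T+1) - D * (T + 1)) := by
    intro t ht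
    apply uniq (T+1) t ψ (fun t => D * t + (ψ (T+1) - D * (T + 1))) θ hψd _ (by ring) t ⟨ht, le_rfl⟩
    intro x hx
    rw [hθhigh x hx.1]
    simpa using ((hasDerivAt_id x).const_mul D).add_const (ψ (T+1) - D * (T + 1))
  set b := ψ (T+1) - D * (T + 1) with hb
  have hφhigh : ∀ t ≥ T + 1, φ t = D / 2 * t ^ 2 + b * t +
      (φ (T+1) - D / 2 * (T+1) ^ 2 - b * (T+1)) := by
    intro t ht
    apply uniq (T+1) t φ (fun t => D / 2 * t ^ 2 + b * t +
      (φ (T+1) - D / 2 * (T+1) ^ 2 - b * (T+1))) ψ hφd _ (by ring) t ⟨ht, le_rfl⟩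
    intro x hx
    rw [hψhigh x hx.1]
    have := ((((hasDerivAt_id x).pow 2).const_mul (D/2)).add ((hasDerivAt_id x).const_mul b)).add_const
      (φ (T+1) - D / 2 * (T+1) ^ 2 - b * (T+1))
    refine this.congr_deriv ?_
    simp; ring
  have hσ' : 0 < min σ D := lt_min hσ hDpos
  have hθσ : ∀ t ≥ 0, min σ D ≤ θ t := by
    intro t ht
    rcases le_or_gt t 1 with h | h
    · rw [hθlow t (by linarith)]; exact (min_le_left _ _).trans (hσb t ⟨ht, h⟩)
    · exact (min_le_right _ _).trans (hθD t h)
  have hψσ : ∀ t ≥ 0, min σ D * t ≤ ψ t := by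
    intro t ht
    have := (convex_Ici (0:ℝ)).mul_sub_le_image_sub_of_le_deriv (f := ψ) (C := min σ D)
      hψs.continuous.continuousOn (fun x _ => (hψd x).differentiableAt.differentiableWithinAt)
      (fun x hx => by rw [interior_Ici] at hx; rw [hdψ]; exact hθσ x (le_of_lt hx))
      0 (by simp) t ht ht
    rw [hψ0] at this; linarith
  have hψpos : ∀ t > 0, 0 < ψ t := fun t ht =>
    lt_of_lt_of_le (by positivity) (hψσ t ht.le)
  have hmv1 : ∀ s ≥ T, ∀ t ≥ s, ψ t - ψ s ≤ θ s * (t - s) := by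
    intro s hs t ht
    exact (convex_Ici s).image_sub_le_mul_sub_of_deriv_le (f := ψ) (C := θ s)
      hψs.continuous.continuousOn (fun x _ => (hψd x).differentiableAt.differentiableWithinAt)
      (fun x hx => by
        rw [interior_Ici] at hx
        have hx : s < x := hx
        rw [hdψ]; exact hθanti hs (show T ≤ x by linarith) hx.le)
      s (by simp) t ht ht
  have hmv2 : ∀ s ≥ T, θ s * (s - T) ≤ ψ s - ψ T := by
    intro s hs
    exact (convex_Icc T s).mul_sub_le_image_sub_of_le_deriv (f := ψ) (C := θ s)
      hψs.continuous.continuousOn (fun x _ => (hψd x).differentiableAt.differentiableWithinAt)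
      (fun x hx => by
        rw [interior_Icc] at hx
        rw [hdψ]; exact hθanti hx.1.le hs hx.2.le)
      T (by simp [hs]) s (by simp [hs]) hs
  have hψT : T * θ T < ψ T := by
    rw [hθlow T le_rfl, hψlow T ⟨by linarith, le_rfl⟩, hf1T, hf2T]
    apply mul_lt_mul_of_pos_left _ (by linarith)
    nlinarith
  have hglow : ∀ t > 0, t ≤ T → ψ t / t = f1 t / t := fun t ht h => by
    rw [hψlow t ⟨ht.le, h⟩]
  have hganti : StrictAntiOn (fun t => ψ t / t) (Set.Ioi 0) := by
    have hu : Set.Ioi (0:ℝ) = Set.Ioc 0 T ∪ Set.Ici T := by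
      ext x; simp only [Set.mem_Ioi, Set.mem_union, Set.mem_Ioc, Set.mem_Ici]
      constructor
      · intro hx
        rcases le_total x T with h | h
        · exact Or.inl ⟨hx, h⟩
        · exact Or.inr h
      · rintro (h | h)
        · exact h.1
        · linarith
    rw [hu]
    apply StrictAntiOn.union (c := T)
    · intro x hx y hy hxy
      simp only [hglow x hx.1 hx.2, hglow y hy.1 hy.2]
      exact hanti hx.1 hy.1 hxy
    · intro s hs t ht hst
      have hs : T ≤ s := hs
      have e1 := hmv1 s hs t hst.le
      have e2 := hmv2 s hs
      have e3 : θ s ≤ θ T := hθanti (by simp) hs hs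
      have e4 : s * θ s < ψ s := by nlinarith
      simp only
      rw [div_lt_div_iff₀ (by linarith) (by linarith)]
      have e5 : 0 < (t - s) * (ψ s - s * θ s) := mul_pos (by linarith) (by linarith)
      have e6 : 0 ≤ s * (θ s * (t - s) - (ψ t - ψ s)) := mul_nonneg (by linarith) (by linarith)
      nlinarith
    · exact ⟨⟨by linarith, le_rfl⟩, fun x hx => hx.2⟩
    · exact ⟨by simp, fun x hx => hx⟩
  refine ⟨φ, min σ D, α, c, hφs, ?_, hσ', hα, hc, ?_, ?_, ?_, ?_, ?_⟩
  · have : StrictMonoOn φ (Set.Ici 0) := by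
      apply strictMonoOn_of_deriv_pos (convex_Ici 0) hφs.continuous.continuousOn
      intro t ht
      rw [interior_Ici] at ht
      rw [hdφ]; exact hψpos t ht
    intro t ht
    rw [← hφ0]; exact this (by simp) ht.le ht
  · have hθ0 : θ 0 = 1 := by rw [hθlow 0 (by linarith), hf20]
    refine ⟨hφ0, by rw [hdφ, hψ0], by rw [hdφ, hdψ, hθ0], ?_⟩
    rw [hdφ]
    have := (hψd 0).tendsto_slope_zero_right
    rw [hθ0] at this
    refine this.congr fun t => ?_
    simp [hψ0, div_eq_inv_mul]
  · exact ⟨T + 1, by linarith, D / 2, b, _, by positivity, hφhigh⟩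
  · rw [hdφ]
    refine ⟨hganti, D, ?_, hDϑ⟩
    have h1 : Filter.Tendsto (fun t : ℝ => D + b * t⁻¹) Filter.atTop (nhds (D + b * 0)) :=
      (tendsto_inv_atTop_zero.const_mul b).const_add D
    rw [mul_zero, add_zero] at h1
    refine h1.congr' ?_
    filter_upwards [Filter.eventually_ge_atTop (T + 1)] with t ht
    have : t ≠ 0 := by linarith
    rw [hψhigh t ht]; field_simp
  · rw [hdφ, hdψ]
    refine ⟨?_, ?_, ?_⟩
    · intro t ht
      exact le_min ((le_div_iff₀ ht).2 (hψσ t ht.le)) (hθσ t ht.le)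
    · apply strictConvexOn_of_deriv2_pos (convex_Ici 0) hφs.continuous.continuousOn
      intro t ht
      rw [interior_Ici] at ht
      simp only [Function.iterate_succ, Function.iterate_zero, Function.comp, id]
      rw [hdφ, hdψ]
      exact lt_of_lt_of_le hσ' (hθσ t (le_of_lt ht))
    · intro t ht h
      by_contra hne
      exact (hψpos t (lt_of_le_of_ne ht (Ne.symm hne))).ne' h
  · rw [hdφ]
    intro t ht hg
    have g1 : 1 ≤ t := by
      by_contra hlt
      push Not at hlt
      have := hganti ht (show (0:ℝ) < 1 by norm_num) hlt
      simp only [hglow 1 one_pos (by linarith)] at this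
      have := hg.2
      rw [div_one] at *
      linarith
    have g2 : t ≤ T := by
      by_contra hlt
      push Not at hlt
      have := hganti (show (0:ℝ) < T by linarith) ht hlt
      simp only [hglow T (by linarith) le_rfl] at this
      rw [hf1T, mul_div_cancel_left₀ _ (by linarith)] at this
      linarith [hg.1]
    rw [hφlow t ⟨ht.le, g2⟩, hft t g1]
end

section
/- Fix τ > 0 and an integer m ≥ 1, and set T = (2m−1)τ/2. Let A : ℝ → ℂ^{2n×2n} be measurable and locally bounded with A(t + τ/2) = A(t) for a.e. t. Let ω, λ ∈ ℂ satisfy ω^{2m−1} = λ^{2m−1} = −1 and ω ≠ λ, and let ξ, η : ℝ → ℂ^{2n} be locally square integrable with ξ(t + τ/2) = ω·ξ(t) and η(t + τ/2) = λ·η(t) for a.e. t. Then ∫₀^T ⟨A(t)ξ(t), η(t)⟩ dt = 0. -/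
open MeasureTheory
open scoped ComplexInnerProductSpace

/-- For a locally bounded measurable `τ/2`-periodic family `A(t)` of operators on `ℂ^{2n}`
and functions `ξ, η` quasi-periodic along distinct `(2m−1)`-th roots `ω ≠ λ` of `−1`,
the pairing `∫₀^T ⟨A ξ, η⟩ dt` vanishes, where `T = (2m−1)τ/2`. -/
theorem pairing_distinct_roots_vanishes
    (n : ℕ) (τ : ℝ) (hτ : 0 < τ) (m : ℕ) (hm : 1 ≤ m)
    (A : ℝ → (EuclideanSpace ℂ (Fin (2 * n)) →L[ℂ] EuclideanSpace ℂ (Fin (2 * n))))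
    (hAmeas : AEStronglyMeasurable A volume)
    (hAbdd : ∀ r > (0 : ℝ), ∃ C : ℝ, ∀ t : ℝ, |t| ≤ r → ‖A t‖ ≤ C)
    (hAper : ∀ᵐ t ∂volume, A (t + τ / 2) = A t)
    (ω lam : ℂ) (hω : ω ^ (2 * m - 1) = -1) (hlam : lam ^ (2 * m - 1) = -1) (hne : ω ≠ lam)
    (ξ η : ℝ → EuclideanSpace ℂ (Fin (2 * n)))
    (hξmeas : AEStronglyMeasurable ξ volume) (hηmeas : AEStronglyMeasurable η volume)
    (hξsq : LocallyIntegrable (fun t => ‖ξ t‖ ^ 2) volume)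
    (hηsq : LocallyIntegrable (fun t => ‖η t‖ ^ 2) volume)
    (hξ : ∀ᵐ t ∂volume, ξ (t + τ / 2) = ω • ξ t)
    (hη : ∀ᵐ t ∂volume, η (t + τ / 2) = lam • η t) :
    (∫ t in (0 : ℝ)..((2 * m - 1 : ℕ) * τ / 2), ⟪A t (ξ t), η t⟫) = 0 := by
  set f : ℝ → ℂ := fun t => ⟪A t (ξ t), η t⟫ with hf
  set h : ℝ := τ / 2 with hh
  set N : ℕ := 2 * m - 1 with hN
  have hN0 : N ≠ 0 := by omega
  set c : ℂ := (starRingEnd ℂ) ω * lam with hc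
  have hωn : ‖ω‖ = 1 := by
    have h1 : ‖ω‖ ^ N = 1 := by rw [← norm_pow, hω]; simp
    exact (pow_eq_one_iff_of_nonneg (norm_nonneg _) hN0).1 h1
  have hωω : ω * (starRingEnd ℂ) ω = 1 := by
    rw [Complex.mul_conj, Complex.normSq_eq_norm_sq, hωn]; simp
  have hc1 : c ≠ 1 := by
    intro h1
    apply hne
    calc ω = ω * c := by rw [h1, mul_one]
      _ = (ω * (starRingEnd ℂ) ω) * lam := by rw [hc, mul_assoc]
      _ = lam := by rw [hωω, one_mul]
  have hcN : c ^ N = 1 := by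
    rw [hc, mul_pow, ← map_pow, hω, hlam]; simp
  have hfper : ∀ᵐ t ∂volume, f (t + h) = c * f t := by
    filter_upwards [hAper, hξ, hη] with t h1 h2 h3
    simp only [hf, h1, h2, h3, map_smul, inner_smul_left, inner_smul_right, hc]
    ring
  have hfmeas : AEStronglyMeasurable f volume := by
    have h1 : AEStronglyMeasurable (fun t => A t (ξ t)) volume :=
      (ContinuousLinearMap.id ℂ (EuclideanSpace ℂ (Fin (2 * n)) →L[ℂ]
        EuclideanSpace ℂ (Fin (2 * n)))).aestronglyMeasurable_comp₂ hAmeas hξmeas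
    exact h1.inner hηmeas
  have hfint : ∀ a b : ℝ, IntervalIntegrable f volume a b := by
    intro a b
    obtain ⟨C, hC⟩ := hAbdd (|a| + |b| + 1) (by positivity)
    have hg : IntervalIntegrable (fun t => C * (‖ξ t‖ ^ 2 + ‖η t‖ ^ 2)) volume a b :=
      (((hξsq.add hηsq).integrableOn_isCompact isCompact_uIcc).intervalIntegrable).const_mul C
    refine hg.mono_fun' hfmeas.restrict ?_
    rw [Filter.EventuallyLE, ae_restrict_iff' measurableSet_uIoc]
    refine Filter.Eventually.of_forall fun t ht => ?_
    have ht' : |t| ≤ |a| + |b| + 1 := by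
      rcases Set.mem_uIoc.1 ht with h1 | h1 <;>
      · rw [abs_le]
        constructor <;>
          linarith [neg_abs_le a, neg_abs_le b, le_abs_self a, le_abs_self b,
            abs_nonneg a, abs_nonneg b]
    have hA := hC t ht'
    have hC0 : 0 ≤ C := (norm_nonneg _).trans hA
    calc ‖f t‖ ≤ ‖A t (ξ t)‖ * ‖η t‖ := norm_inner_le_norm _ _
      _ ≤ (C * ‖ξ t‖) * ‖η t‖ := by
        gcongr
        exact (A t).le_of_opNorm_le hA _
      _ = C * (‖ξ t‖ * ‖η t‖) := by ring
      _ ≤ C * (‖ξ t‖ ^ 2 + ‖η t‖ ^ 2) := by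
        gcongr
        nlinarith [sq_nonneg (‖ξ t‖ - ‖η t‖), sq_nonneg ‖ξ t‖, sq_nonneg ‖η t‖]
  have hstep : ∀ a b : ℝ, ∫ t in (a + h)..(b + h), f t = c * ∫ t in a..b, f t := by
    intro a b
    rw [← intervalIntegral.integral_comp_add_right, ← intervalIntegral.integral_const_mul]
    apply intervalIntegral.integral_congr_ae
    filter_upwards [hfper] with t ht _ using ht
  have hk : ∀ k : ℕ, ∫ t in ((k : ℝ) * h)..(((k + 1 : ℕ) : ℝ) * h), f t
      = c ^ k * ∫ t in (0 : ℝ)..h, f t := by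
    intro k
    induction k with
    | zero => simp
    | succ k ih =>
      have e1 : ((k + 1 : ℕ) : ℝ) * h = (k : ℝ) * h + h := by push_cast; ring
      have e2 : ((k + 1 + 1 : ℕ) : ℝ) * h = ((k + 1 : ℕ) : ℝ) * h + h := by push_cast; ring
      rw [e2]
      nth_rewrite 1 [e1]
      rw [hstep, ih, pow_succ]
      ring
  have hsum := intervalIntegral.sum_integral_adjacent_intervals (f := f) (μ := volume)
    (a := fun k : ℕ => (k : ℝ) * h) (n := N) (fun k _ => hfint _ _)
  have e : (N : ℝ) * τ / 2 = (N : ℝ) * h := by rw [hh]; ring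
  rw [e]
  simp only [Nat.cast_zero, zero_mul] at hsum
  rw [← hsum, Finset.sum_congr rfl (fun k _ => hk k), ← Finset.sum_mul, geom_sum_eq hc1, hcN]
  simp
end

section
/- Let U ⊆ ℝ^{2n} be an open bounded convex set with 0 ∈ U and Σ = ∂U, and set r̂ = min{|y| : y ∈ Σ} > 0 and R̂ = max{|y| : y ∈ Σ}. Let a > 0, let ϑ ∈ (0, r̂²/(2a)), and let φ : [0, ∞) → ℝ be differentiable with φ(0) = 0 such that for some σ > 0 one has φ'(t)/t ≥ σ for all t > 0, the function t ↦ φ'(t)/t is decreasing on (0, ∞), and lim_{t→+∞} φ'(t)/t < ϑ. Define H_a(x) = a·φ(j(x)), where j is the gauge function of U. Then there exist ε₁, ε₂ ∈ (0, 1/2) and C ≥ 0 such that (ε₁/2)|x|² − C ≤ H_a(x) ≤ (ε₂/2)|x|² + C for all x ∈ ℝ^{2n}. -/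
open Set

/-- Quadratic two-sided growth bounds for the Hamiltonian `H_a(x) = a·φ(j(x))`, where `j`
is the gauge function of `U`, with constants `ε₁, ε₂ ∈ (0, 1/2)`. -/
theorem Hamiltonian_quadratic_bounds
    (n : ℕ) (U : Set (EuclideanSpace ℝ (Fin (2 * n))))
    (hUopen : IsOpen U) (hUbdd : Bornology.IsBounded U) (hUconv : Convex ℝ U)
    (h0U : (0 : EuclideanSpace ℝ (Fin (2 * n))) ∈ U)
    (a ϑ : ℝ) (ha : 0 < a)
    (hϑ0 : 0 < ϑ) (hϑ1 : ϑ < (sInf (norm '' frontier U)) ^ 2 / (2 * a))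
    (φ φ' : ℝ → ℝ)
    (hφd : ∀ t ∈ Set.Ici (0 : ℝ), HasDerivWithinAt φ (φ' t) (Set.Ici 0) t)
    (hφ0 : φ 0 = 0)
    (σ : ℝ) (hσ : 0 < σ) (hlow : ∀ t > (0 : ℝ), σ ≤ φ' t / t)
    (hdec : AntitoneOn (fun t => φ' t / t) (Set.Ioi 0))
    (hlim : ∃ L : ℝ, Filter.Tendsto (fun t => φ' t / t) Filter.atTop (nhds L) ∧ L < ϑ) :
    ∃ ε₁ ε₂ C : ℝ, ε₁ ∈ Set.Ioo (0 : ℝ) (1 / 2) ∧ ε₂ ∈ Set.Ioo (0 : ℝ) (1 / 2) ∧ 0 ≤ C ∧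
      ∀ x : EuclideanSpace ℝ (Fin (2 * n)),
        ε₁ / 2 * ‖x‖ ^ 2 - C ≤ a * φ (gauge U x) ∧
        a * φ (gauge U x) ≤ ε₂ / 2 * ‖x‖ ^ 2 + C := by
  obtain ⟨L, hL, hLϑ⟩ := hlim
  set r := sInf (norm '' frontier U) with hr
  have hr0 : 0 ≤ r := Real.sInf_nonneg (by rintro _ ⟨y, -, rfl⟩; exact norm_nonneg y)
  have hrpos : 0 < r := by
    rcases hr0.eq_or_lt with h | h
    · rw [← h] at hϑ1
      norm_num at hϑ1
      linarith
    · exact h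
  have hUnhds : U ∈ nhds (0 : EuclideanSpace ℝ (Fin (2 * n))) := hUopen.mem_nhds h0U
  have hup : ∀ x, gauge U x * r ≤ ‖x‖ := by
    intro x
    rcases (gauge_nonneg (s := U) x).eq_or_lt with h | h
    · rw [← h]; simp
    · have h1 : gauge U ((gauge U x)⁻¹ • x) = 1 := by
        rw [gauge_smul_of_nonneg (inv_nonneg.2 h.le), smul_eq_mul, inv_mul_cancel₀ h.ne']
      rw [gauge_eq_one_iff_mem_frontier hUconv hUnhds] at h1
      have h2 : r ≤ ‖(gauge U x)⁻¹ • x‖ :=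
        csInf_le ⟨0, by rintro _ ⟨y, -, rfl⟩; exact norm_nonneg y⟩ ⟨_, h1, rfl⟩
      rw [norm_smul, Real.norm_of_nonneg (inv_nonneg.2 h.le)] at h2
      calc gauge U x * r ≤ gauge U x * ((gauge U x)⁻¹ * ‖x‖) := by gcongr
        _ = ‖x‖ := by field_simp
  obtain ⟨R, hRpos, hR⟩ := hUbdd.subset_closedBall_lt 0 0
  have hlo : ∀ x, ‖x‖ ≤ gauge U x * R := by
    intro x
    have := le_gauge_of_subset_closedBall (x := x) (absorbent_nhds_zero hUnhds) hRpos.le hR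
    rwa [div_le_iff₀ hRpos] at this
  have hcont : ContinuousOn φ (Set.Ici 0) := fun t ht => (hφd t ht).continuousWithinAt
  have hder : ∀ c t : ℝ, 0 < t → HasDerivAt (fun t => φ t - c / 2 * t ^ 2) (φ' t - c * t) t := by
    intro c t ht
    have h1 := (hφd t ht.le).hasDerivAt (Ici_mem_nhds ht)
    have h2 := ((hasDerivAt_id t).pow 2).const_mul (c / 2)
    refine (h1.sub h2).congr_deriv ?_
    simp
    ring
  have hmono : MonotoneOn (fun t => φ t - σ / 2 * t ^ 2) (Set.Ici 0) := by
    refine monotoneOn_of_hasDerivWithinAt_nonneg (f' := fun t => φ' t - σ * t) (convex_Ici 0)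
      (hcont.sub (by fun_prop)) ?_ ?_
    · intro t ht
      rw [interior_Ici] at ht
      exact (hder σ t ht).hasDerivWithinAt
    · intro t ht
      rw [interior_Ici] at ht
      have := hlow t ht
      rw [le_div_iff₀ ht] at this
      linarith
  obtain ⟨T, hTpos, hT⟩ : ∃ T > (0 : ℝ), ∀ t ≥ T, φ' t / t < ϑ := by
    obtain ⟨T, hT⟩ := Filter.eventually_atTop.1 (hL.eventually (gt_mem_nhds hLϑ))
    exact ⟨max T 1, by positivity, fun t ht => hT t (le_trans (le_max_left _ _) ht)⟩
  have hanti : AntitoneOn (fun t => φ t - ϑ / 2 * t ^ 2) (Set.Ici T) := by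
    refine antitoneOn_of_hasDerivWithinAt_nonpos (f' := fun t => φ' t - ϑ * t) (convex_Ici T)
      ((hcont.mono (Set.Ici_subset_Ici.2 hTpos.le)).sub (by fun_prop)) ?_ ?_
    · intro t ht
      rw [interior_Ici] at ht
      exact (hder ϑ t (hTpos.trans ht)).hasDerivWithinAt
    · intro t ht
      rw [interior_Ici] at ht
      have := hT t (le_of_lt ht)
      rw [div_lt_iff₀ (hTpos.trans ht)] at this
      linarith
  have hφlow : ∀ t ≥ (0 : ℝ), σ / 2 * t ^ 2 ≤ φ t := by
    intro t ht
    have := hmono (Set.mem_Ici.2 le_rfl) ht ht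
    simp only [hφ0] at this
    linarith
  have hφT : 0 ≤ φ T := le_trans (by positivity) (hφlow T hTpos.le)
  have hφup : ∀ t ≥ (0 : ℝ), φ t ≤ ϑ / 2 * t ^ 2 + φ T := by
    intro t ht
    rcases le_total t T with h | h
    · have h1 := hmono ht hTpos.le h
      have h2 : t ^ 2 ≤ T ^ 2 := by gcongr
      have h3 : 0 ≤ ϑ / 2 * t ^ 2 := by positivity
      simp only at h1
      nlinarith
    · have h1 := hanti (Set.mem_Ici.2 le_rfl) h h
      have h3 : 0 ≤ ϑ / 2 * T ^ 2 := by positivity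
      simp only at h1
      linarith
  refine ⟨min (a * σ / R ^ 2) (1 / 4), a * ϑ / r ^ 2, a * φ T, ⟨by positivity, ?_⟩,
    ⟨by positivity, ?_⟩, by positivity, ?_⟩
  · exact lt_of_le_of_lt (min_le_right _ _) (by norm_num)
  · rw [lt_div_iff₀ (by positivity)] at hϑ1
    rw [div_lt_iff₀ (by positivity)]
    linarith
  · intro x
    have hg := gauge_nonneg (s := U) x
    constructor
    · have h1 : ‖x‖ ^ 2 ≤ (gauge U x * R) ^ 2 := by gcongr; exact hlo x
      have h2 : min (a * σ / R ^ 2) (1 / 4) / 2 * ‖x‖ ^ 2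
          ≤ a * σ / R ^ 2 / 2 * (gauge U x * R) ^ 2 := by
        gcongr
        exact min_le_left _ _
      have h3 : a * σ / R ^ 2 / 2 * (gauge U x * R) ^ 2 = a * (σ / 2 * gauge U x ^ 2) := by
        field_simp
      have h4 := mul_le_mul_of_nonneg_left (hφlow _ hg) ha.le
      have h5 : 0 ≤ a * φ T := by positivity
      linarith
    · have h1 : (gauge U x * r) ^ 2 ≤ ‖x‖ ^ 2 := by gcongr; exact hup x
      have h2 : a * ϑ / r ^ 2 / 2 * (gauge U x * r) ^ 2 ≤ a * ϑ / r ^ 2 / 2 * ‖x‖ ^ 2 := by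
        gcongr
      have h3 : a * ϑ / r ^ 2 / 2 * (gauge U x * r) ^ 2 = a * (ϑ / 2 * gauge U x ^ 2) := by
        field_simp
      have h4 := mul_le_mul_of_nonneg_left (hφup _ hg) ha.le
      linarith
end
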